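/- Let 𝒫 = [-1,1]² and let x₁, x₂ be independent random points uniformly distributed in 𝒫. Then the random variable V_{𝒫,2} = vol₂(conv{±x₁, ±x₂})/vol₂(𝒫) has density f(t) = 1_{[0,1]}(t) ∫_{2t-1}^{1} (log|s|)(log|2t−s|) ds with respect to Lebesgue measure; that is, for every Borel set B ⊆ ℝ, P(V_{𝒫,2} ∈ B) = ∫_B f(t) dt. -/

import Mathlib

open MeasureTheory Set

noncomputable section

/-- The square `𝒫 = [-1,1]²`. -/
def unitSquare : Set (EuclideanSpace ℝ (Fin 2)) := {x | ∀ i, x i ∈ Set.Icc (-1 : ℝ) 1}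

/-- The normalized area `V_{𝒫,2}` of the symmetric convex hull `conv{±x₁, ±x₂}` of the
points `x 0, x 1`, for the square `𝒫 = [-1,1]²`. -/
def VunitSquare (x : Fin 2 → EuclideanSpace ℝ (Fin 2)) : ℝ :=
  (volume (convexHull ℝ (Set.range x ∪ -Set.range x))).toReal / (volume unitSquare).toReal

section
open scoped ENNReal


def hh (p : ℝ) : ℝ≥0∞ := (Icc (-1:ℝ) 1).indicator (fun p => ENNReal.ofReal (-2 * Real.log |p|)) p

lemma hh_meas : Measurable hh := by
  unfold hh
  refine Measurable.indicator ?_ measurableSet_Icc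
  fun_prop

lemma lint_abs (φ : ℝ → ℝ≥0∞) :
    ∫⁻ u, φ |u| = 2 * ∫⁻ u in Ioi (0:ℝ), φ u := by
  rw [← lintegral_add_compl (fun u => φ |u|) (measurableSet_Ioi (a := (0:ℝ))), compl_Ioi, two_mul]
  congr 1
  · exact setLIntegral_congr_fun measurableSet_Ioi (fun u hu => by simp only [abs_of_pos (mem_Ioi.1 hu)])
  · have h1 : ∫⁻ u in Iic (0:ℝ), φ |u| = ∫⁻ u in Iic (0:ℝ), φ (-u) :=
      setLIntegral_congr_fun measurableSet_Iic (fun u hu => by simp only [abs_of_nonpos (mem_Iic.1 hu)])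
    have h2 := (Measure.measurePreserving_neg (volume : Measure ℝ)).setLIntegral_comp_preimage_emb
      (MeasurableEquiv.neg ℝ).measurableEmbedding φ (Ici 0)
    rw [h1, ← setLIntegral_congr (Ioi_ae_eq_Ici (a := (0:ℝ)) (μ := volume)).symm, ← h2]
    simp

lemma lint_scale {a : ℝ} (ha : a ≠ 0) (F : ℝ → ℝ≥0∞) (hF : Measurable F) :
    ∫⁻ d, F (a * d) = ENNReal.ofReal |a⁻¹| * ∫⁻ p, F p := by
  rw [← lintegral_map hF (measurable_const_mul a), Real.map_volume_mul_left ha, lintegral_smul_measure]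
  rfl

lemma hh_eq {p : ℝ} (hp : p ≠ 0) :
    ∫⁻ a in Icc (-1:ℝ) 1, {a : ℝ | |p| ≤ |a|}.indicator (fun a => ENNReal.ofReal |a⁻¹|) a = hh p := by
  have h1 : ∫⁻ a in Icc (-1:ℝ) 1, {a : ℝ | |p| ≤ |a|}.indicator (fun a => ENNReal.ofReal |a⁻¹|) a
      = ∫⁻ a, (Icc |p| 1).indicator (fun r => ENNReal.ofReal r⁻¹) |a| := by
    rw [← lintegral_indicator measurableSet_Icc]
    congr 1; ext a
    simp only [indicator, mem_Icc, mem_ofPred_eq, ← abs_le, abs_inv]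
    split_ifs <;> simp_all
  have hp' := abs_pos.2 hp
  rw [h1, lint_abs, lintegral_indicator measurableSet_Icc, Measure.restrict_restrict measurableSet_Icc]
  have h2 : Icc |p| 1 ∩ Ioi 0 = Icc |p| 1 := by
    apply inter_eq_left.2; intro x hx; exact lt_of_lt_of_le hp' hx.1
  rw [h2, hh]
  by_cases hp1 : |p| ≤ 1
  · rw [indicator_of_mem (by exact abs_le.1 hp1)]
    have hi : IntervalIntegrable (fun r : ℝ => r⁻¹) volume |p| 1 := by
      apply intervalIntegral.intervalIntegrable_inv
      · intro x hx; rw [uIcc_of_le hp1] at hx; exact (lt_of_lt_of_le hp' hx.1).ne'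
      · fun_prop
    rw [setLIntegral_congr (Ioc_ae_eq_Icc (μ := volume)).symm, ← ofReal_integral_eq_lintegral_ofReal
      ((intervalIntegrable_iff_integrableOn_Ioc_of_le hp1).1 hi), ← intervalIntegral.integral_of_le hp1,
      integral_inv_of_pos hp' one_pos]
    · rw [show (2:ℝ≥0∞) = ENNReal.ofReal 2 by simp, ← ENNReal.ofReal_mul (by norm_num)]
      congr 1; rw [Real.log_div one_ne_zero hp'.ne', Real.log_one]; ring
    · filter_upwards [ae_restrict_mem measurableSet_Ioc] with x hx
      exact inv_nonneg.2 (hp'.trans hx.1).le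
  · rw [indicator_of_notMem (by rwa [mem_Icc, ← abs_le]), Icc_eq_empty hp1]; simp

lemma prod_law (G : ℝ → ℝ≥0∞) (hG : Measurable G) :
    ∫⁻ a in Icc (-1:ℝ) 1, ∫⁻ d in Icc (-1:ℝ) 1, G (a * d) = ∫⁻ p, G p * hh p := by
  have hS : MeasurableSet {q : ℝ × ℝ | |q.2| ≤ |q.1|} :=
    measurableSet_le (by fun_prop) (by fun_prop)
  have h1 : ∫⁻ a in Icc (-1:ℝ) 1, ∫⁻ d in Icc (-1:ℝ) 1, G (a * d) =
      ∫⁻ a in Icc (-1:ℝ) 1, ∫⁻ p, G p * {a : ℝ | |p| ≤ |a|}.indicator (fun a => ENNReal.ofReal |a⁻¹|) a := by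
    apply lintegral_congr_ae
    have : ∀ᵐ a : ℝ ∂(volume.restrict (Icc (-1:ℝ) 1)), a ≠ 0 :=
      ae_restrict_of_ae (Measure.ae_ne volume 0)
    filter_upwards [this] with a ha
    have e : ∫⁻ d in Icc (-1:ℝ) 1, G (a * d) = ∫⁻ d, {p : ℝ | |p| ≤ |a|}.indicator G (a * d) := by
      rw [← lintegral_indicator measurableSet_Icc]
      congr 1; ext d
      have : |a * d| ≤ |a| ↔ |d| ≤ 1 := by
        rw [abs_mul]; exact mul_le_iff_le_one_right (abs_pos.2 ha)
      simp only [indicator, mem_Icc, mem_ofPred_eq, ← abs_le, this]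
    have hm : MeasurableSet {p : ℝ | |p| ≤ |a|} := measurableSet_le (by fun_prop) (by fun_prop)
    rw [e, lint_scale ha _ (hG.indicator hm), ← lintegral_const_mul _ (hG.indicator hm)]
    congr 1; ext p
    simp only [indicator, mem_ofPred_eq]
    split_ifs <;> simp [mul_comm]
  rw [h1, lintegral_lintegral_swap]
  · apply lintegral_congr_ae
    filter_upwards [Measure.ae_ne volume (0:ℝ)] with p hp
    rw [lintegral_const_mul, hh_eq hp]
    exact Measurable.indicator (by fun_prop) (measurableSet_le (by fun_prop) (by fun_prop))
  · apply Measurable.aemeasurable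
    have : Measurable ({q : ℝ × ℝ | |q.2| ≤ |q.1|}.indicator (fun q : ℝ × ℝ => ENNReal.ofReal |q.1⁻¹|)) :=
      Measurable.indicator (by fun_prop) hS
    exact (hG.comp measurable_snd).mul this

def HH (u : ℝ) : ℝ≥0∞ := ∫⁻ p, hh p * hh (p - u)

lemma HH_meas : Measurable HH := by
  have := hh_meas
  unfold HH
  exact Measurable.lintegral_prod_right' (f := fun z : ℝ × ℝ => hh z.2 * hh (z.2 - z.1)) (by fun_prop)

lemma HH_neg (u : ℝ) : HH (-u) = HH u := by
  unfold HH
  rw [← lintegral_sub_right_eq_self _ u]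
  simp [mul_comm]

lemma HH_abs (u : ℝ) : HH |u| = HH u := by
  rcases abs_choice u with h | h <;> rw [h]
  exact HH_neg u

lemma det_law (G : ℝ → ℝ≥0∞) (hG : Measurable G) :
    ∫⁻ a in Icc (-1:ℝ) 1, ∫⁻ d in Icc (-1:ℝ) 1, ∫⁻ b in Icc (-1:ℝ) 1, ∫⁻ c in Icc (-1:ℝ) 1,
      G (a * d - b * c) = ∫⁻ u, G u * HH u := by
  have := hh_meas
  have h1 : ∀ a d : ℝ, ∫⁻ b in Icc (-1:ℝ) 1, ∫⁻ c in Icc (-1:ℝ) 1, G (a * d - b * c)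
      = ∫⁻ q, G (a * d - q) * hh q := fun a d =>
    prod_law (fun q => G (a * d - q)) (by fun_prop)
  simp_rw [h1]
  rw [prod_law (fun p => ∫⁻ q, G (p - q) * hh q)]
  · have h2 : ∀ p, (∫⁻ q, G (p - q) * hh q) * hh p = ∫⁻ u, G u * (hh p * hh (p - u)) := by
      intro p
      rw [← lintegral_sub_left_eq_self _ p, ← lintegral_mul_const _ (by fun_prop)]
      congr 1; ext u; rw [sub_sub_cancel]; ring
    simp_rw [h2]
    rw [lintegral_lintegral_swap (by apply Measurable.aemeasurable; fun_prop)]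
    congr 1; ext u
    rw [lintegral_const_mul _ (by fun_prop)]; rfl
  · exact Measurable.lintegral_prod_right' (f := fun z : ℝ × ℝ => G (z.1 - z.2) * hh z.2) (by fun_prop)

def ff (t : ℝ) : ℝ≥0∞ := (Icc (0:ℝ) 1).indicator (fun t => HH (2 * t)) t

lemma abs_law (B : Set ℝ) (hB : MeasurableSet B) :
    ∫⁻ u, B.indicator 1 (|u| / 2) * HH u = 4 * ∫⁻ t in B, ff t := by
  have hHm := HH_meas
  have h1 : ∫⁻ u, B.indicator 1 (|u| / 2) * HH u = ∫⁻ u, (fun r => B.indicator 1 (r/2) * HH r) |u| := by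
    simp [HH_abs]
  have hm1 : Measurable (B.indicator (1 : ℝ → ℝ≥0∞)) := measurable_one.indicator hB
  rw [h1, lint_abs (fun r => B.indicator 1 (r/2) * HH r), ← lintegral_indicator measurableSet_Ioi]
  have h2 : Measurable ((Ioi (0:ℝ)).indicator (fun u => B.indicator (1 : ℝ → ℝ≥0∞) (u/2) * HH u)) :=
    Measurable.indicator (by fun_prop) measurableSet_Ioi
  have h3 := lint_scale (a := 2) two_ne_zero _ h2
  have h4 : ∫⁻ u, ((Ioi (0:ℝ)).indicator (fun u => B.indicator (1 : ℝ → ℝ≥0∞) (u/2) * HH u)) u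
     = 2 * ∫⁻ u, ((Ioi (0:ℝ)).indicator (fun u => B.indicator (1 : ℝ → ℝ≥0∞) (u/2) * HH u)) (2 * u) := by
    rw [h3, ← mul_assoc]
    rw [show (2:ℝ≥0∞) = ENNReal.ofReal 2 by simp, ← ENNReal.ofReal_mul (by norm_num)]
    norm_num
  rw [h4, ← mul_assoc]
  congr 1
  · norm_num
  · rw [← lintegral_indicator hB]
    apply lintegral_congr_ae
    filter_upwards [Measure.ae_ne volume (0:ℝ)] with t ht
    have h0 : 1 < t → HH (2 * t) = 0 := by
      intro h
      unfold HH
      rw [lintegral_eq_zero_iff (by have := hh_meas; fun_prop)]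
      apply Filter.Eventually.of_forall
      intro p
      simp only [hh, indicator, mem_Icc, Pi.zero_apply]
      split_ifs
      · linarith
      all_goals simp
    simp only [ff, indicator, mem_Ioi, mem_Icc]
    have e : 2 * t / 2 = t := by ring
    rw [e]
    rcases lt_or_gt_of_ne ht with h | h
    · rw [if_neg (by linarith), if_neg (c := 0 ≤ t ∧ t ≤ 1) (fun hc => by linarith [hc.1])]; simp
    · rw [if_pos (by linarith)]
      by_cases hh1 : t ≤ 1
      · simp [h.le, hh1]
      · simp [h0 (not_le.1 hh1)]

lemma ff_eq (t : ℝ) : Set.indicator (Set.Icc (0 : ℝ) 1)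
        (fun t => ∫ s in (2 * t - 1)..(1 : ℝ), Real.log |s| * Real.log |2 * t - s|) t
      = (ff t).toReal / 4 := by
  unfold ff
  by_cases ht : t ∈ Icc (0:ℝ) 1
  · rw [indicator_of_mem ht, indicator_of_mem ht]
    have hle : 2 * t - 1 ≤ 1 := by linarith [ht.2]
    rw [intervalIntegral.integral_of_le hle, ← integral_Icc_eq_integral_Ioc,
      integral_eq_lintegral_of_nonneg_ae]
    · rw [show (4:ℝ) = (4:ℝ≥0∞).toReal by simp, ← ENNReal.toReal_div]
      congr 1
      rw [ENNReal.eq_div_iff (by norm_num) (by norm_num), ← lintegral_const_mul _ (by fun_prop),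
        ← lintegral_indicator measurableSet_Icc]
      unfold HH
      congr 1; ext p
      unfold hh
      by_cases hp : p ∈ Icc (2 * t - 1) 1
      · have h1 : p ∈ Icc (-1 : ℝ) 1 := ⟨by linarith [ht.1, hp.1], hp.2⟩
        have h2 : p - 2 * t ∈ Icc (-1 : ℝ) 1 := ⟨by linarith [ht.1, hp.1], by linarith [ht.1, hp.2]⟩
        have hl : Real.log |p| ≤ 0 := Real.log_nonpos (abs_nonneg _) (abs_le.2 h1)
        rw [indicator_of_mem hp, indicator_of_mem h1, indicator_of_mem h2,
          ← ENNReal.ofReal_mul (by linarith), show (4:ℝ≥0∞) = ENNReal.ofReal 4 by simp, ← ENNReal.ofReal_mul (by norm_num),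
          abs_sub_comm p]
        congr 1; ring
      · rw [indicator_of_notMem hp]
        by_cases h1 : p ∈ Icc (-1 : ℝ) 1
        · rw [indicator_of_notMem (a := p - 2 * t), mul_zero]
          intro h2; exact hp ⟨by linarith [h2.1], h1.2⟩
        · rw [indicator_of_notMem h1, zero_mul]
    · filter_upwards [ae_restrict_mem measurableSet_Icc] with p hp
      apply mul_nonneg_of_nonpos_of_nonpos
      · exact Real.log_nonpos (abs_nonneg _) (abs_le.2 ⟨by linarith [ht.1, hp.1], hp.2⟩)
      · exact Real.log_nonpos (abs_nonneg _) (abs_le.2 ⟨by linarith [ht.1, hp.2], by linarith [hp.1]⟩)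
    · apply Measurable.aestronglyMeasurable; fun_prop
  · rw [indicator_of_notMem ht, indicator_of_notMem ht]; simp

lemma ff_meas : Measurable ff := by
  have := HH_meas
  exact Measurable.indicator (by fun_prop) measurableSet_Icc

lemma int_ff (B : Set ℝ) (h : ∫⁻ t in B, ff t ≠ ∞) : ∫ t in B, Set.indicator (Set.Icc (0 : ℝ) 1)
        (fun t => ∫ s in (2 * t - 1)..(1 : ℝ), Real.log |s| * Real.log |2 * t - s|) t
      = (∫⁻ t in B, ff t).toReal / 4 := by
  simp_rw [ff_eq]
  rw [integral_div, integral_toReal ff_meas.aemeasurable (ae_lt_top ff_meas h)]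

lemma vol_sq : volume unitSquare = 4 := by
  have h : unitSquare = WithLp.ofLp ⁻¹' (Icc (fun _ => -1) (fun _ => 1) : Set (Fin 2 → ℝ)) := by
    ext x; simp [unitSquare, Pi.le_def, forall_and]
  rw [h, (PiLp.volume_preserving_ofLp (Fin 2)).measure_preimage measurableSet_Icc.nullMeasurableSet,
    Real.volume_Icc_pi]
  norm_num

def l1ball : Set (Fin 2 → ℝ) := {u | |u 0| + |u 1| ≤ 1}

lemma vol_l1 : volume l1ball = 2 := by
  have := volume_sum_rpow_le (ι := Fin 2) (p := 1) le_rfl 1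
  simp only [Real.rpow_one, div_one, Fin.sum_univ_two] at this
  rw [l1ball, this]
  norm_num

/-- the matrix map u ↦ ∑ u i • x i in coordinates -/
def MM (x : Fin 2 → EuclideanSpace ℝ (Fin 2)) : Matrix (Fin 2) (Fin 2) ℝ :=
  !![x 0 0, x 1 0; x 0 1, x 1 1]

lemma MM_apply (x : Fin 2 → EuclideanSpace ℝ (Fin 2)) (u : Fin 2 → ℝ) :
    WithLp.toLp 2 (Matrix.toLin' (MM x) u) = u 0 • x 0 + u 1 • x 1 := by
  ext i
  fin_cases i <;> simp [MM, Matrix.toLin'_apply, Matrix.mulVec, dotProduct, Fin.sum_univ_two, mul_comm]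

lemma l1_convex : Convex ℝ l1ball := by
  intro u hu v hv a b ha hb hab
  simp only [l1ball, mem_ofPred_eq, Pi.add_apply, Pi.smul_apply, smul_eq_mul] at *
  have h0 := abs_add_le (a * u 0) (b * v 0)
  have h1 := abs_add_le (a * u 1) (b * v 1)
  simp only [abs_mul, abs_of_nonneg ha, abs_of_nonneg hb] at h0 h1
  nlinarith

lemma hull_eq (x : Fin 2 → EuclideanSpace ℝ (Fin 2)) :
    convexHull ℝ (Set.range x ∪ -Set.range x) =
      WithLp.ofLp ⁻¹' (Matrix.toLin' (MM x) '' l1ball) := by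
  have key : WithLp.ofLp ⁻¹' (Matrix.toLin' (MM x) '' l1ball) =
      (fun u : Fin 2 → ℝ => u 0 • x 0 + u 1 • x 1) '' l1ball := by
    ext y; constructor
    · rintro ⟨u, hu, h⟩
      refine ⟨u, hu, ?_⟩
      simp only
      rw [← MM_apply, h]
    · rintro ⟨u, hu, rfl⟩
      refine ⟨u, hu, ?_⟩
      simp only
      rw [← MM_apply]
  rw [key]
  apply Subset.antisymm
  · apply convexHull_min
    · rintro y (⟨i, rfl⟩ | ⟨i, hi⟩)
      · fin_cases i
        · exact ⟨![1, 0], by simp [l1ball], by simp⟩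
        · exact ⟨![0, 1], by simp [l1ball], by simp⟩
      · have : y = - x i := by rw [hi, neg_neg]
        subst this
        fin_cases i
        · exact ⟨![-1, 0], by simp [l1ball], by simp⟩
        · exact ⟨![0, -1], by simp [l1ball], by simp⟩
    · have := l1_convex.linear_image ((LinearMap.proj 0 : (Fin 2 → ℝ) →ₗ[ℝ] ℝ).smulRight (x 0) +
        (LinearMap.proj 1 : (Fin 2 → ℝ) →ₗ[ℝ] ℝ).smulRight (x 1))
      exact this
  · rintro _ ⟨u, hu, rfl⟩
    set C := convexHull ℝ (Set.range x ∪ -Set.range x) with hC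
    have hc : Convex ℝ C := convex_convexHull ℝ _
    have hp : ∀ i, x i ∈ C := fun i => subset_convexHull ℝ _ (Or.inl ⟨i, rfl⟩)
    have hn : ∀ i, - x i ∈ C := fun i => subset_convexHull ℝ _ (Or.inr ⟨i, by simp⟩)
    have hs : ∀ (i) (r : ℝ), ∃ y ∈ C, r • x i = |r| • y := by
      intro i r
      rcases abs_choice r with h | h
      · exact ⟨x i, hp i, by rw [h]⟩
      · exact ⟨- x i, hn i, by rw [h]; simp⟩
    have h0 : (0 : EuclideanSpace ℝ (Fin 2)) ∈ C := by
      have := hc (hp 0) (hn 0) (a := 1/2) (b := 1/2) (by norm_num) (by norm_num) (by norm_num)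
      simpa using this
    obtain ⟨y, hy, ey⟩ := hs 0 (u 0)
    obtain ⟨z, hz, ez⟩ := hs 1 (u 1)
    simp only
    rw [ey, ez]
    have hu' : |u 0| + |u 1| ≤ 1 := hu
    have := hc.sum_mem (t := Finset.univ) (w := ![|u 0|, |u 1|, 1 - |u 0| - |u 1|]) (z := ![y, z, 0])
      (by intro i _; fin_cases i <;> simp; linarith) (by simp [Fin.sum_univ_three])
      (by intro i _; fin_cases i <;> simp [hy, hz, h0])
    simpa [Fin.sum_univ_three] using this

lemma V_eq (x : Fin 2 → EuclideanSpace ℝ (Fin 2)) :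
    VunitSquare x = |x 0 0 * x 1 1 - x 0 1 * x 1 0| / 2 := by
  have hv : volume (convexHull ℝ (Set.range x ∪ -Set.range x)) =
      ENNReal.ofReal |x 0 0 * x 1 1 - x 0 1 * x 1 0| * 2 := by
    rw [hull_eq]
    have := (PiLp.volume_preserving_ofLp (Fin 2)).measure_preimage_emb
      (MeasurableEquiv.toLp 2 (Fin 2 → ℝ)).symm.measurableEmbedding (Matrix.toLin' (MM x) '' l1ball)
    rw [this, Measure.addHaar_image_linearMap, vol_l1, LinearMap.det_toLin', MM, Matrix.det_fin_two_of]
    ring_nf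
  rw [VunitSquare, hv, vol_sq]
  simp
  ring

lemma vol_set (B : Set ℝ) (hB : MeasurableSet B) :
    volume {x : Fin 2 → EuclideanSpace ℝ (Fin 2) | (∀ i, x i ∈ unitSquare) ∧ VunitSquare x ∈ B} =
    ∫⁻ a in Icc (-1:ℝ) 1, ∫⁻ d in Icc (-1:ℝ) 1, ∫⁻ b in Icc (-1:ℝ) 1, ∫⁻ c in Icc (-1:ℝ) 1,
      B.indicator 1 (|a * d - b * c| / 2) := by
  have hm1 : Measurable (B.indicator (1 : ℝ → ℝ≥0∞)) := measurable_one.indicator hB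
  let Φ : (Fin 2 → EuclideanSpace ℝ (Fin 2)) → (ℝ × ℝ) × (ℝ × ℝ) :=
    fun x => ((x 0 0, x 0 1), (x 1 0, x 1 1))
  have hE : MeasurePreserving (fun y : EuclideanSpace ℝ (Fin 2) => (y 0, y 1)) volume volume :=
    (volume_preserving_finTwoArrow ℝ).comp (PiLp.volume_preserving_ofLp (Fin 2))
  have hΦ : MeasurePreserving Φ volume volume :=
    (hE.prod hE).comp (volume_preserving_finTwoArrow (EuclideanSpace ℝ (Fin 2)))
  let I := Icc (-1:ℝ) 1
  let T : Set ((ℝ × ℝ) × (ℝ × ℝ)) := {z | |z.1.1 * z.2.2 - z.1.2 * z.2.1| / 2 ∈ B}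
  have hT : MeasurableSet T := by
    have : Measurable (fun z : (ℝ × ℝ) × (ℝ × ℝ) => |z.1.1 * z.2.2 - z.1.2 * z.2.1| / 2) := by fun_prop
    exact this hB
  have hI : MeasurableSet I := measurableSet_Icc
  have hs : {x : Fin 2 → EuclideanSpace ℝ (Fin 2) | (∀ i, x i ∈ unitSquare) ∧ VunitSquare x ∈ B} =
      Φ ⁻¹' (T ∩ (I ×ˢ I) ×ˢ (I ×ˢ I)) := by
    ext x
    simp only [mem_ofPred_eq, V_eq, unitSquare, Fin.forall_fin_two, mem_preimage, mem_inter_iff, T, Φ, mem_prod, I]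
    tauto
  rw [hs, hΦ.measure_preimage (hT.inter ((hI.prod hI).prod (hI.prod hI))).nullMeasurableSet,
    ← Measure.restrict_apply hT]
  have hr : (volume : Measure ((ℝ × ℝ) × (ℝ × ℝ))).restrict ((I ×ˢ I) ×ˢ (I ×ˢ I)) =
      ((volume.restrict I).prod (volume.restrict I)).prod ((volume.restrict I).prod (volume.restrict I)) := by
    rw [Measure.prod_restrict, Measure.prod_restrict]; rfl
  rw [hr, ← lintegral_indicator_one hT]
  have hi : T.indicator (1 : (ℝ × ℝ) × (ℝ × ℝ) → ℝ≥0∞) =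
    fun z => B.indicator 1 (|z.1.1 * z.2.2 - z.1.2 * z.2.1| / 2) := rfl
  rw [hi, lintegral_prod _ (by apply Measurable.aemeasurable; fun_prop),
    lintegral_prod _ (by
      apply Measurable.aemeasurable
      exact Measurable.lintegral_prod_right' (f := fun z : (ℝ × ℝ) × (ℝ × ℝ) =>
        B.indicator (1 : ℝ → ℝ≥0∞) (|z.1.1 * z.2.2 - z.1.2 * z.2.1| / 2)) (by fun_prop))]
  congr 1; ext a
  simp only
  rw [lintegral_lintegral_swap (by apply Measurable.aemeasurable; fun_prop),
    lintegral_prod _ (by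
      apply Measurable.aemeasurable
      exact Measurable.lintegral_prod_right' (f := fun z : (ℝ × ℝ) × ℝ =>
        B.indicator (1 : ℝ → ℝ≥0∞) (|a * z.1.2 - z.2 * z.1.1| / 2)) (by fun_prop)),
    lintegral_lintegral_swap (by
      apply Measurable.aemeasurable
      exact Measurable.lintegral_prod_right' (f := fun z : (ℝ × ℝ) × ℝ =>
        B.indicator (1 : ℝ → ℝ≥0∞) (|a * z.1.2 - z.2 * z.1.1| / 2)) (by fun_prop))]
  congr 1; ext d
  rw [lintegral_lintegral_swap (by apply Measurable.aemeasurable; fun_prop)]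

end

/-- For `x₁, x₂` independent uniform random points in the square `𝒫 = [-1,1]²`, the random
variable `V_{𝒫,2} = vol₂(conv{±x₁, ±x₂}) / vol₂(𝒫)` has density
`t ↦ 1_{[0,1]}(t) ∫_{2t-1}^{1} (log|s|)(log|2t−s|) ds` with respect to Lebesgue measure. -/
theorem density_V_square
    (B : Set ℝ) (hB : MeasurableSet B) :
    (volume {x : Fin 2 → EuclideanSpace ℝ (Fin 2) |
          (∀ i, x i ∈ unitSquare) ∧ VunitSquare x ∈ B}).toReal /
        (volume unitSquare).toReal ^ 2 =
      ∫ t in B, Set.indicator (Set.Icc (0 : ℝ) 1)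
        (fun t => ∫ s in (2 * t - 1)..(1 : ℝ), Real.log |s| * Real.log |2 * t - s|) t := by
  have key : ∀ B : Set ℝ, MeasurableSet B → volume {x : Fin 2 → EuclideanSpace ℝ (Fin 2) |
      (∀ i, x i ∈ unitSquare) ∧ VunitSquare x ∈ B} = 4 * ∫⁻ t in B, ff t := by
    intro B hB
    have hm1 : Measurable (B.indicator (1 : ℝ → ENNReal)) := measurable_one.indicator hB
    rw [vol_set B hB, det_law (fun u => B.indicator 1 (|u| / 2)) (by fun_prop), abs_law B hB]
  have hfin : ∫⁻ t in B, ff t ≠ ⊤ := by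
    have h1 : volume {x : Fin 2 → EuclideanSpace ℝ (Fin 2) |
        (∀ i, x i ∈ unitSquare) ∧ VunitSquare x ∈ B} ≠ ⊤ := by
      have h2 : volume (Set.univ.pi (fun _ : Fin 2 => unitSquare)) ≠ ⊤ := by
        rw [volume_pi_pi]
        simp [vol_sq]
      refine measure_ne_top_of_subset ?_ h2
      intro x hx i _
      exact hx.1 i
    rw [key B hB] at h1
    intro h
    rw [h] at h1
    exact h1 (ENNReal.mul_top (by norm_num))
  rw [key B hB, vol_sq, int_ff B hfin, ENNReal.toReal_mul]
  norm_num
  ring
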